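/- Every subcode D of the 9-dimensional exceptional triply even code D^{ex} of length 48 that contains the all-one vector satisfies dim(D·D) = C(dim D, 2) + 1. -/

import Mathlib

/-- `Ω`: the set of 2-element subsets of `X = {1,…,10}`. -/
def TwoSubset : Type := {S : Finset (Fin 10) // S.card = 2}

instance : Fintype TwoSubset := by unfold TwoSubset; infer_instance
instance : DecidableEq TwoSubset := by unfold TwoSubset; infer_instance

/-- `γ_{{i,j}} ∈ F₂^Ω`: the characteristic vector of `{S ∈ Ω : |S ∩ {i,j}| = 1}`. -/
def triGamma (p : TwoSubset) : TwoSubset → ZMod 2 :=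
  fun S => if (S.1 ∩ p.1).card = 1 then 1 else 0

/-- `ι : F₂^45 → F₂^48` appending three zero coordinates. -/
def iotaExt (v : TwoSubset → ZMod 2) : TwoSubset ⊕ Fin 3 → ZMod 2 :=
  Sum.elim v 0

/-- The exceptional triply even code `D^{ex}` of length 48: generated by the (appended)
rows `ι(γ_{{i,j}})` of the incidence matrix of the triangular graph on 10 points together
with the all-one vector. -/
def Dex : Submodule (ZMod 2) (TwoSubset ⊕ Fin 3 → ZMod 2) :=
  Submodule.span (ZMod 2)
    (Set.range (fun p => iotaExt (triGamma p)) ∪ {(1 : TwoSubset ⊕ Fin 3 → ZMod 2)})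

/-- `D·D`: the span of all coordinatewise products of pairs of codewords. -/
def DdotD {ι : Type*} [Fintype ι] (D : Submodule (ZMod 2) (ι → ZMod 2)) :
    Submodule (ZMod 2) (ι → ZMod 2) :=
  Submodule.span (ZMod 2) {z | ∃ a ∈ D, ∃ b ∈ D, z = a * b}

/-!
Choose a basis of `D` containing `1`, with `d` elements. Every codeword over `F₂` is idempotent, so
`D·D` is spanned by `1` and the `C(d, 2)` products of two distinct basis elements. Such a basis
extends to one of any code containing `D`, so if these spanning words are independent for
the larger code, then they are independent for `D`.

For `D^{ex}` itself, let `y i = ι(γ_{{i,9}})` for the nine points `i ≠ 9`. At a pair `S` avoiding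
`9` the value of `y i` is `[i ∈ S]`, so `y i * y j` restricts to the indicator of `{i, j}` on these
pairs. All these products vanish on the three added coordinates, where `1` does not, so
`D^{ex}·D^{ex}` has dimension at least `C(9, 2) + 1`. On the other hand `∑ i, y i = 0`, so `1` and
the `y i` span a space of dimension at most `9`, and this space contains `D^{ex}`.
-/

section EmptyAndPairs

variable {α : Type*} {S T s : Finset α}

/-- The index set of the products that span a code squared: the two-element subsets of `T`, and
`∅`, which stands for the empty product `1`. -/
def emptyAndPairs (T : Finset α) : Finset (Finset α) :=
  (T.powersetCard 2).cons ∅ (by simp [Finset.mem_powersetCard])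

lemma mem_emptyAndPairs : s ∈ emptyAndPairs T ↔ s = ∅ ∨ s ⊆ T ∧ s.card = 2 := by
  rw [emptyAndPairs, Finset.mem_cons, Finset.mem_powersetCard]

lemma card_emptyAndPairs (T : Finset α) :
    (emptyAndPairs T).card = T.card.choose 2 + 1 := by
  rw [emptyAndPairs, Finset.card_cons, Finset.card_powersetCard]

lemma emptyAndPairs_mono (h : S ⊆ T) : emptyAndPairs S ⊆ emptyAndPairs T :=
  Finset.cons_subset_cons.2 (Finset.powersetCard_mono h)

end EmptyAndPairs

section SpanProducts

variable {R A : Type*} [CommSemiring R] [CommSemiring A] [Algebra R A]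

lemma prod_mem_mul_self_of_mem_emptyAndPairs {D : Submodule R A} (h1 : 1 ∈ D) {κ : Type*}
    {y : κ → A} {T s : Finset κ} (hy : ∀ i ∈ T, y i ∈ D) (hs : s ∈ emptyAndPairs T) :
    ∏ i ∈ s, y i ∈ D * D := by
  classical
  obtain rfl | ⟨hsT, hcard⟩ := mem_emptyAndPairs.1 hs
  · simpa using Submodule.mul_mem_mul h1 h1
  · obtain ⟨i, j, hij, rfl⟩ := Finset.card_eq_two.1 hcard
    rw [Finset.prod_pair hij]
    exact Submodule.mul_mem_mul (hy i (hsT (by simp))) (hy j (hsT (by simp)))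

lemma exists_mem_emptyAndPairs_prod_eq_mul {B : Finset A} (h1 : 1 ∈ B)
    (hB : ∀ b ∈ B, IsIdempotentElem b) {a b : A} (ha : a ∈ B) (hb : b ∈ B) :
    ∃ s ∈ emptyAndPairs B, ∏ c ∈ s, c = a * b := by
  classical
  have pair_mem {a b : A} (ha : a ∈ B) (hb : b ∈ B) (hab : a ≠ b) : {a, b} ∈ emptyAndPairs B :=
    mem_emptyAndPairs.2 (.inr ⟨by simp [Finset.insert_subset_iff, ha, hb], Finset.card_pair hab⟩)
  obtain rfl | hab := eq_or_ne a b
  · rw [(hB a ha).eq]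
    obtain rfl | ha1 := eq_or_ne a 1
    · exact ⟨∅, mem_emptyAndPairs.2 (.inl rfl), Finset.prod_empty⟩
    · exact ⟨{a, 1}, pair_mem ha h1 ha1, by rw [Finset.prod_pair ha1, mul_one]⟩
  · exact ⟨{a, b}, pair_mem ha hb hab, Finset.prod_pair hab⟩

lemma span_mul_span_self_eq_span_prod {B : Finset A} (h1 : 1 ∈ B)
    (hB : ∀ b ∈ B, IsIdempotentElem b) :
    Submodule.span R (B : Set A) * Submodule.span R (B : Set A) =
      Submodule.span R
        ((fun s : Finset A => ∏ b ∈ s, b) '' (emptyAndPairs B : Set (Finset A))) := by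
  apply le_antisymm
  · rw [Submodule.span_mul_span]
    apply Submodule.span_mono
    rintro _ ⟨a, ha, b, hb, rfl⟩
    exact exists_mem_emptyAndPairs_prod_eq_mul h1 hB ha hb
  · rw [Submodule.span_le]
    rintro _ ⟨s, hs, rfl⟩
    exact prod_mem_mul_self_of_mem_emptyAndPairs (Submodule.subset_span h1)
      (fun b hb => Submodule.subset_span hb) hs

end SpanProducts

lemma exists_finset_extension_span_eq {K V : Type*} [Field K] [AddCommGroup V] [Module K V]
    {B₀ : Finset V} (h₀ : LinearIndepOn K id (B₀ : Set V)) {W : Submodule K V}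
    [FiniteDimensional K W] (hB₀ : (B₀ : Set V) ⊆ W) :
    ∃ B : Finset V, B₀ ⊆ B ∧ LinearIndepOn K id (B : Set V) ∧
      Submodule.span K (B : Set V) = W := by
  obtain ⟨b, hbW, hB₀b, hWb, hb⟩ := exists_linearIndepOn_id_extension h₀ hB₀
  have hspan : Submodule.span K b = W := le_antisymm (Submodule.span_le.2 hbW) hWb
  have hfin : b.Finite := by
    rw [← Cardinal.lt_aleph0_iff_set_finite, ← rank_span_set hb, hspan]
    exact Module.rank_lt_aleph0 K W
  lift b to Finset V using hfin
  exact ⟨b, Finset.coe_subset.1 hB₀b, hb, hspan⟩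

section Subcode

variable {K A : Type*} [Field K] [CommRing A] [Algebra K A]

lemma linearIndepOn_prod_of_le_finrank_span_mul_span_self {B : Finset A} (h1 : 1 ∈ B)
    (hB : ∀ b ∈ B, IsIdempotentElem b)
    (hdim : B.card.choose 2 + 1 ≤ Module.finrank K
      ↥(Submodule.span K (B : Set A) * Submodule.span K (B : Set A))) :
    LinearIndepOn K (fun s : Finset A => ∏ b ∈ s, b) (emptyAndPairs B : Set (Finset A)) := by
  rw [span_mul_span_self_eq_span_prod h1 hB, Set.image_eq_range, ← card_emptyAndPairs] at hdim
  exact linearIndependent_iff_card_le_finrank_span.2 ((Fintype.card_coe _).trans_le hdim)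

lemma finrank_span_mul_span_self_of_linearIndepOn_prod {B : Finset A} (h1 : 1 ∈ B)
    (hB : ∀ b ∈ B, IsIdempotentElem b)
    (hind : LinearIndepOn K (fun s : Finset A => ∏ b ∈ s, b)
      (emptyAndPairs B : Set (Finset A))) :
    Module.finrank K ↥(Submodule.span K (B : Set A) * Submodule.span K (B : Set A)) =
      B.card.choose 2 + 1 := by
  rw [span_mul_span_self_eq_span_prod h1 hB, Set.image_eq_range, ← card_emptyAndPairs]
  exact (finrank_span_eq_card hind).trans (Fintype.card_coe _)

theorem finrank_mul_self_of_le {C D : Submodule K A} [FiniteDimensional K C]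
    (hidem : ∀ a ∈ C, IsIdempotentElem a)
    (hC : (Module.finrank K C).choose 2 + 1 ≤ Module.finrank K ↥(C * C))
    (hDC : D ≤ C) (h1 : 1 ∈ D) :
    Module.finrank K ↥(D * D) = (Module.finrank K D).choose 2 + 1 := by
  have : Nontrivial A := by
    by_contra h
    rw [not_nontrivial_iff_subsingleton] at h
    simp [Module.finrank_zero_of_subsingleton] at hC
  have : FiniteDimensional K D := Submodule.finiteDimensional_of_le hDC
  have hone : LinearIndepOn K id (({1} : Finset A) : Set A) := by simp
  obtain ⟨B, h1B, hB, rfl⟩ := exists_finset_extension_span_eq hone (W := D) (by simpa using h1)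
  obtain ⟨B', hBB', hB', rfl⟩ :=
    exists_finset_extension_span_eq hB (Submodule.subset_span.trans hDC)
  have one_mem : 1 ∈ B := Finset.singleton_subset_iff.1 h1B
  have idem' : ∀ b ∈ B', IsIdempotentElem b := fun b hb => hidem b (Submodule.subset_span hb)
  rw [finrank_span_finset_eq_card hB'] at hC
  rw [finrank_span_finset_eq_card hB]
  have hind :=
    linearIndepOn_prod_of_le_finrank_span_mul_span_self (hBB' one_mem) idem' hC
  exact finrank_span_mul_span_self_of_linearIndepOn_prod one_mem (fun b hb => idem' b (hBB' hb))
    (hind.mono (Finset.coe_subset.2 (emptyAndPairs_mono hBB')))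

end Subcode

lemma linearIndepOn_prod_of_separating {R X κ : Type*} [CommRing R] [DecidableEq κ]
    (y : κ → X → R) (P : Set (Finset κ))
    (hP : ∀ t ∈ P, ∃ x, ∀ i, y i x = if i ∈ t then 1 else 0) :
    LinearIndepOn R (fun s : Finset κ => ∏ i ∈ s, y i) P := by
  rw [linearIndepOn_iff']
  intro F c hF hc t
  -- At a point cutting out `t`, only the products over subsets of `t` survive.
  induction t using Finset.strongInduction with
  | H t ih =>
    intro ht
    obtain ⟨x, hx⟩ := hP t (hF ht)
    have heval (s : Finset κ) : (∏ i ∈ s, y i) x = if s ⊆ t then 1 else 0 := by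
      simp only [Finset.prod_apply, hx, Finset.prod_ite_zero, Finset.prod_const_one,
        Finset.subset_iff]
    have hother : ∀ s ∈ F, s ≠ t → (c s • ∏ i ∈ s, y i) x = 0 := by
      intro s hs hst
      by_cases hsub : s ⊆ t
      · simp [ih s (hsub.ssubset_of_ne hst) hs]
      · simp only [Pi.smul_apply, heval, if_neg hsub, smul_zero]
    calc c t = (c t • ∏ i ∈ t, y i) x := by simp [heval]
      _ = (∑ s ∈ F, c s • ∏ i ∈ s, y i) x := by
        rw [Finset.sum_apply, Finset.sum_eq_single_of_mem t ht hother]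
      _ = 0 := congrFun hc x

lemma finrank_span_range_lt_card_of_sum_eq_zero {K V κ : Type*} [Field K] [AddCommGroup V]
    [Module K V] [Fintype κ] [Nonempty κ] {v : κ → V} (hv : ∑ i, v i = 0) :
    Module.finrank K (Submodule.span K (Set.range v)) < Fintype.card κ := by
  by_contra! h
  have hind : LinearIndependent K v := linearIndependent_iff_card_le_finrank_span.2 h
  exact one_ne_zero (Fintype.linearIndependent_iff.1 hind 1 (by simpa using hv)
    (Classical.arbitrary κ))

lemma DdotD_eq_mul {ι : Type*} [Fintype ι] (D : Submodule (ZMod 2) (ι → ZMod 2)) :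
    DdotD D = D * D := by
  rw [Submodule.mul_eq_span_mul_set, DdotD]
  congr 1
  ext z
  simp only [Set.mem_ofPred_eq, Set.mem_mul, SetLike.mem_coe, eq_comm]

lemma isIdempotentElem_pi_zmod_two {X : Type*} (f : X → ZMod 2) : IsIdempotentElem f := by
  have hidem : ∀ a : ZMod 2, a * a = a := by decide
  exact funext fun x => hidem (f x)

section Dex

/-- The word of length 48 with support `{S ∈ Ω : k ∈ S}`. Sums of two of these are the generators
`ι(γ_{{i,j}})` of `D^{ex}`. -/
def pointVec (k : Fin 10) : TwoSubset ⊕ Fin 3 → ZMod 2 :=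
  iotaExt fun S => if k ∈ S.1 then 1 else 0

/-- The word `ι(γ_{{k,9}})`, encoded as a sum so that it makes sense, and vanishes, for `k = 9`. -/
def starVec (k : Fin 10) : TwoSubset ⊕ Fin 3 → ZMod 2 :=
  pointVec k + pointVec (Fin.last 9)

lemma pointVec_inl (k : Fin 10) {S : Finset (Fin 10)} (hS : S.card = 2) :
    pointVec k (.inl ⟨S, hS⟩) = if k ∈ S then 1 else 0 :=
  rfl

lemma iotaExt_triGamma_pair {a b : Fin 10} (hab : a ≠ b) :
    iotaExt (triGamma ⟨{a, b}, Finset.card_pair hab⟩) = pointVec a + pointVec b := by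
  funext x
  rcases x with S | _
  · have hcard : (S.1 ∩ {a, b}).card =
        (if a ∈ S.1 then 1 else 0) + if b ∈ S.1 then 1 else 0 := by
      rw [Finset.inter_comm, ← Finset.filter_mem_eq_inter, Finset.card_filter,
        Finset.sum_pair hab]
    simp only [iotaExt, triGamma, pointVec, Pi.add_apply, Sum.elim_inl, hcard]
    by_cases ha : a ∈ S.1 <;> by_cases hb : b ∈ S.1 <;> simp [ha, hb, CharTwo.add_self_eq_zero]
  · rfl

lemma sum_pointVec : ∑ k, pointVec k = 0 := by
  funext x
  rw [Finset.sum_apply]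
  rcases x with S | _
  · calc ∑ k, pointVec k (.inl S) = ∑ k : Fin 10, if k ∈ S.1 then (1 : ZMod 2) else 0 := rfl
      _ = (S.1.card : ZMod 2) := by rw [Finset.sum_boole, Finset.filter_univ_mem]
      _ = 0 := by rw [S.2]; rfl
  · exact Finset.sum_const_zero

lemma starVec_last : starVec (Fin.last 9) = 0 :=
  CharTwo.add_self_eq_zero _

lemma starVec_add_starVec (a b : Fin 10) : starVec a + starVec b = pointVec a + pointVec b := by
  rw [starVec, starVec, add_add_add_comm, CharTwo.add_self_eq_zero, add_zero]

lemma sum_starVec_castSucc : ∑ i : Fin 9, starVec i.castSucc = 0 := by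
  have hsum : ∑ k, starVec k = 0 := by
    simp only [starVec, Finset.sum_add_distrib, sum_pointVec, Finset.sum_const, zero_add]
    rw [Finset.card_fin, ← Nat.cast_smul_eq_nsmul (ZMod 2), show ((10 : ℕ) : ZMod 2) = 0 from rfl,
      zero_smul]
  rwa [Fin.sum_univ_castSucc, starVec_last, add_zero] at hsum

lemma starVec_castSucc_mem_Dex (i : Fin 9) : starVec i.castSucc ∈ Dex :=
  Submodule.subset_span
    (.inl ⟨⟨_, Finset.card_pair i.castSucc_ne_last⟩, iotaExt_triGamma_pair i.castSucc_ne_last⟩)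

lemma one_mem_Dex : 1 ∈ Dex :=
  Submodule.subset_span (.inr rfl)

lemma Dex_le_span_one_sup_span_starVec :
    Dex ≤ Submodule.span (ZMod 2) {1} ⊔
      Submodule.span (ZMod 2) (Set.range fun i : Fin 9 => starVec i.castSucc) := by
  have star_mem (k : Fin 10) : starVec k ∈
      Submodule.span (ZMod 2) (Set.range fun i : Fin 9 => starVec i.castSucc) := by
    induction k using Fin.lastCases with
    | last => rw [starVec_last]; exact Submodule.zero_mem _
    | cast i => exact Submodule.subset_span ⟨i, rfl⟩
  rw [Dex, Submodule.span_le]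
  rintro _ (⟨⟨p, hp⟩, rfl⟩ | rfl)
  · obtain ⟨a, b, hab, rfl⟩ := Finset.card_eq_two.1 hp
    beta_reduce
    rw [iotaExt_triGamma_pair hab, ← starVec_add_starVec]
    exact Submodule.mem_sup_right (Submodule.add_mem _ (star_mem a) (star_mem b))
  · exact Submodule.mem_sup_left (Submodule.mem_span_singleton_self 1)

lemma finrank_Dex_le : Module.finrank (ZMod 2) Dex ≤ 9 := by
  have hone : Module.finrank (ZMod 2)
      (Submodule.span (ZMod 2) {(1 : TwoSubset ⊕ Fin 3 → ZMod 2)}) = 1 :=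
    finrank_span_singleton one_ne_zero
  have hstar := finrank_span_range_lt_card_of_sum_eq_zero (K := ZMod 2) sum_starVec_castSucc
  rw [Fintype.card_fin] at hstar
  have hsup := (Submodule.finrank_mono Dex_le_span_one_sup_span_starVec).trans
    (Submodule.finrank_add_le_finrank_add_finrank _ _)
  omega

lemma exists_starVec_eq_indicator {t : Finset (Fin 9)} (ht : t ∈ emptyAndPairs Finset.univ) :
    ∃ x, ∀ i : Fin 9, starVec i.castSucc x = if i ∈ t then 1 else 0 := by
  obtain rfl | ⟨-, hcard⟩ := mem_emptyAndPairs.1 ht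
  · exact ⟨.inr 0, fun i => rfl⟩
  · refine ⟨.inl ⟨t.map Fin.castSuccEmb, by rwa [Finset.card_map]⟩, fun i => ?_⟩
    simp [starVec, pointVec_inl, -Fin.reduceLast]

lemma le_finrank_Dex_mul_Dex : Nat.choose 9 2 + 1 ≤ Module.finrank (ZMod 2) ↥(Dex * Dex) := by
  have hind := linearIndepOn_prod_of_separating (fun i : Fin 9 => starVec i.castSucc)
    (emptyAndPairs Finset.univ : Finset (Finset (Fin 9))) fun t ht => exists_starVec_eq_indicator ht
  calc Nat.choose 9 2 + 1 = (emptyAndPairs (Finset.univ : Finset (Fin 9))).card := by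
        rw [card_emptyAndPairs, Finset.card_fin]
    _ = _ := ((finrank_span_eq_card hind).trans (Fintype.card_coe _)).symm
    _ ≤ Module.finrank (ZMod 2) ↥(Dex * Dex) := by
      apply Submodule.finrank_mono
      rw [Submodule.span_le]
      rintro _ ⟨s, rfl⟩
      exact prod_mem_mul_self_of_mem_emptyAndPairs one_mem_Dex
        (fun i _ => starVec_castSucc_mem_Dex i) s.2

end Dex

/-- Every subcode `D` of the 9-dimensional exceptional triply even code `D^{ex}` of length 48
containing the all-one vector satisfies `dim(D·D) = C(dim D, 2) + 1`. -/
theorem finrank_DdotD_subcode_Dex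
    (D : Submodule (ZMod 2) (TwoSubset ⊕ Fin 3 → ZMod 2)) (hD : D ≤ Dex)
    (h1 : (1 : TwoSubset ⊕ Fin 3 → ZMod 2) ∈ D) :
    Module.finrank (ZMod 2) ↥(DdotD D) =
      (Module.finrank (ZMod 2) ↥D).choose 2 + 1 := by
  rw [DdotD_eq_mul]
  refine finrank_mul_self_of_le (fun a _ => isIdempotentElem_pi_zmod_two a) ?_ hD h1
  calc (Module.finrank (ZMod 2) Dex).choose 2 + 1
      ≤ Nat.choose 9 2 + 1 := by gcongr; exact finrank_Dex_le
    _ ≤ Module.finrank (ZMod 2) ↥(Dex * Dex) := le_finrank_Dex_mul_Dex
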